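/- (Lions-type vanishing lemma, Euclidean instance of Lemma 3.1.) Let p ≤ q < p*_s. Let (u_k) be a sequence in W^{s,p}(ℝ^N) with sup_k ‖u_k‖_{W^{s,p}} < ∞ and with liminf_{k→∞} sup_{x∈ℝ^N} ∫_{B(x,1)} |u_k(y)|^q dy = 0, where B(x,1) is the Euclidean unit ball centered at x. Then there exists a subsequence (u_{k_j}) such that ‖u_{k_j}‖_{L^r(ℝ^N)} → 0 as j → ∞ for every r ∈ (q, p*_s). -/

import Mathlib

/-!
Put `θ = p s / N`, `p* = N p / (N - p s)` and `D x = ∫ |u x - u y|^p / |x - y|^(N + ps) dy`.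

Everything follows from one pointwise inequality. Fix `x` with `w x > 0`, where `w` is `|u|` or a
truncation of it, and choose `ε` so that the ball `B(x, ε)` has volume `2 A / (w x / 2)^m`. If
`∫_{B(x, ε)} w^m ≤ A`, Chebyshev's inequality gives `w ≤ w x / 2` on at least half of the ball. There
`|u x - u y| ≥ w x / 2`, and so `(w x / 2)^(p + θ m) ≤ C A^θ D x` (`pointwise_bound`).

* With `m = p*` and `A = ∫ w^m`, one has `p + θ m = m`, and integrating gives
  `∫ w^m ≤ C (∫ w^m)^θ [u]^p`. Since `θ < 1`, this is the fractional Sobolev inequality, once `w` is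
  truncated so that `∫ w^m` is finite (`sobolev_bound`).
* With `m = q` and `A` a bound for `∫_{B(x, 1)} |u|^q` over all `x`, the points where `ε > 1` satisfy
  `(w x / 2)^q ≤ C A`, and integrating gives
  `∫ |u|^(p + θ q) ≤ C A^θ ‖u‖_{W^{s,p}}^p` (`lintegral_bound_local`).

Along a subsequence the right-hand side of the second estimate tends to `0`. As
`p < p + θ q < p*`, interpolating with the bounds in `L^p` and `L^{p*}` gives all exponents.
-/

open MeasureTheory Real Filter

noncomputable section

abbrev Euc (N : ℕ) := EuclideanSpace ℝ (Fin N)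

/-- `p`-th power of the Gagliardo seminorm `[u]_{s,p}^p`. -/
def gagP (N : ℕ) (s p : ℝ) (u : Euc N → ℝ) : ℝ :=
  ∫ z : Euc N × Euc N, |u z.1 - u z.2| ^ p / ‖z.1 - z.2‖ ^ ((N : ℝ) + p * s)

/-- `∫ |u|^p`. -/
def intP (N : ℕ) (p : ℝ) (u : Euc N → ℝ) : ℝ :=
  ∫ x : Euc N, |u x| ^ p

/-- Membership in the fractional Sobolev space `W^{s,p}(ℝ^N)`. -/
def memW (N : ℕ) (s p : ℝ) (u : Euc N → ℝ) : Prop :=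
  Integrable (fun x : Euc N => |u x| ^ p) ∧
  Integrable (fun z : Euc N × Euc N => |u z.1 - u z.2| ^ p / ‖z.1 - z.2‖ ^ ((N : ℝ) + p * s))

/-- The fractional Sobolev norm `‖u‖_{W^{s,p}} = (‖u‖_{L^p}^p + [u]_{s,p}^p)^{1/p}`. -/
def sobNorm (N : ℕ) (s p : ℝ) (u : Euc N → ℝ) : ℝ :=
  (intP N p u + gagP N s p u) ^ (1 / p)

/-- Energy functional. -/
def Ifun (N : ℕ) (s p q : ℝ) (u : Euc N → ℝ) : ℝ :=
  (1 / p) * gagP N s p u + (1 / p) * intP N p u - (1 / q) * intP N q u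

/-- Nehari functional. -/
def Lfun (N : ℕ) (s p q : ℝ) (u : Euc N → ℝ) : ℝ :=
  gagP N s p u + intP N p u - intP N q u

/-- Nehari manifold. -/
def Nehari (N : ℕ) (s p q : ℝ) : Set (Euc N → ℝ) :=
  {u | memW N s p u ∧ u ≠ 0 ∧ Lfun N s p q u = 0}

/-- Nehari level. -/
def dLevel (N : ℕ) (s p q : ℝ) : ℝ :=
  sInf (Ifun N s p q '' Nehari N s p q)

/-- Weak solution of `(-Δ_p)^s u + |u|^{p-2}u = |u|^{q-2}u`. -/
def isWeakSol (N : ℕ) (s p q : ℝ) (u : Euc N → ℝ) : Prop :=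
  memW N s p u ∧ ∀ φ : Euc N → ℝ, memW N s p φ →
    (∫ z : Euc N × Euc N,
        |u z.1 - u z.2| ^ (p - 2) * (u z.1 - u z.2) * (φ z.1 - φ z.2) /
          ‖z.1 - z.2‖ ^ ((N : ℝ) + p * s)) +
      (∫ x : Euc N, (|u x| ^ (p - 2) * u x - |u x| ^ (q - 2) * u x) * φ x) = 0

/-- Least energy solution. -/
def isLeastEnergySol (N : ℕ) (s p q : ℝ) (u : Euc N → ℝ) : Prop :=
  isWeakSol N s p q u ∧ u ≠ 0 ∧
    ∀ v : Euc N → ℝ, isWeakSol N s p q v → v ≠ 0 → Ifun N s p q u ≤ Ifun N s p q v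

/-! ### Measure-theoretic preliminaries -/

/-- The inner integral `∫ |u x - u y|^p / |x - y|^(N + ps) dy` of the Gagliardo seminorm,
as an extended nonnegative number. -/
def gagInner (N : ℕ) (s p : ℝ) (u : Euc N → ℝ) (x : Euc N) : ENNReal :=
  ∫⁻ y : Euc N, ENNReal.ofReal (|u x - u y| ^ p / ‖x - y‖ ^ ((N : ℝ) + p * s))

/-- Volume of the Euclidean unit ball. -/
def unitVol (N : ℕ) : ℝ := (volume (Metric.ball (0 : Euc N) 1)).toReal

lemma unitVol_pos (N : ℕ) : 0 < unitVol N :=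
  ENNReal.toReal_pos (Metric.measure_ball_pos volume _ one_pos).ne' measure_ball_lt_top.ne

lemma volume_ball_eq (N : ℕ) (x : Euc N) {ε : ℝ} (hε : 0 < ε) :
    volume (Metric.ball x ε) = ENNReal.ofReal (unitVol N * ε ^ N) := by
  rw [Measure.addHaar_ball_of_pos volume x hε, finrank_euclideanSpace_fin, mul_comm (unitVol N),
    ENNReal.ofReal_mul (by positivity), unitVol, ENNReal.ofReal_toReal measure_ball_lt_top.ne]

lemma lintegral_gagInner {N : ℕ} {s p : ℝ} {u : Euc N → ℝ} (hu : memW N s p u) :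
    ∫⁻ x, gagInner N s p u x = ENNReal.ofReal (gagP N s p u) := by
  unfold gagInner gagP
  rw [ofReal_integral_eq_lintegral_ofReal hu.2
    (Eventually.of_forall fun z => by positivity), Measure.volume_eq_prod, lintegral_prod]
  exact hu.2.1.aemeasurable.ennreal_ofReal

lemma lintegral_rpow_eq {N : ℕ} {s p : ℝ} {u : Euc N → ℝ} (hu : memW N s p u) :
    ∫⁻ x, ENNReal.ofReal (|u x| ^ p) = ENNReal.ofReal (intP N p u) := by
  unfold intP
  rw [ofReal_integral_eq_lintegral_ofReal hu.1 (Eventually.of_forall fun z => by positivity)]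

/-- Only `|u|` is needed to be measurable, and it is a power of the integrable `|u| ^ p`. -/
lemma aemeasurable_abs {N : ℕ} {s p : ℝ} (hp : 0 < p) {u : Euc N → ℝ} (hu : memW N s p u) :
    AEMeasurable (fun x => |u x|) volume := by
  have h := hu.1.1.aemeasurable.pow_const (1 / p)
  refine h.congr (Eventually.of_forall fun x => ?_)
  simp only
  rw [← Real.rpow_mul (abs_nonneg _), mul_one_div_cancel hp.ne', Real.rpow_one]

/-! ### The pointwise estimate and its integrated forms -/

/-- Pointwise estimate behind both the Sobolev inequality and the vanishing lemma. Let
`a = w x / 2`. If `∫_{B(x,ε)} w ^ m ≤ A` on the ball of volume `2 * A / a ^ m`, then by Chebyshev's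
inequality `w ≤ a` on at least half of that ball, and there `|u x - u y| ≥ a`. -/
lemma pointwise_bound {N : ℕ} (hN : 1 ≤ N) {s p m : ℝ} (hs0 : 0 < s) (hp : 0 < p) (hm : 0 < m)
    {u w : Euc N → ℝ} (hwm : AEMeasurable w volume)
    (hwu : ∀ x y, |w x - w y| ≤ |u x - u y|) {A ε : ℝ} (hA : 0 < A) (hε : 0 < ε)
    (x : Euc N) (hx : 0 < w x) (hεA : unitVol N * ε ^ N * (w x / 2) ^ m = 2 * A)
    (hint : ∫⁻ y in Metric.ball x ε, ENNReal.ofReal (w y ^ m) ≤ ENNReal.ofReal A) :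
    ENNReal.ofReal ((w x / 2) ^ (p + p * s / N * m)) ≤
      ENNReal.ofReal (2 / unitVol N * (2 * A / unitVol N) ^ (p * s / N)) *
        gagInner N s p u x := by
  have hω := unitVol_pos N
  have hN0 : (0 : ℝ) < N := by exact_mod_cast hN
  set ω := unitVol N with hωdef
  set a := w x / 2 with ha_def
  have ha : 0 < a := by positivity
  have ham : 0 < a ^ m := by positivity
  have hAm : A / a ^ m = ω * ε ^ N / 2 := by field_simp; linarith
  set B := Metric.ball x ε with hB
  have hT : volume (B ∩ {y | a < w y}) ≤ ENNReal.ofReal (A / a ^ m) := by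
    have h1 := mul_meas_ge_le_lintegral₀ (μ := volume.restrict B)
      (f := fun y => ENNReal.ofReal (w y ^ m))
      ((hwm.pow_const m).ennreal_ofReal.restrict) (ENNReal.ofReal (a ^ m))
    have h2 : volume (B ∩ {y | a < w y}) ≤
        volume.restrict B {y | ENNReal.ofReal (a ^ m) ≤ ENNReal.ofReal (w y ^ m)} := by
      rw [Measure.restrict_apply₀' measurableSet_ball.nullMeasurableSet]
      refine measure_mono fun y hy => ⟨?_, hy.1⟩
      exact ENNReal.ofReal_le_ofReal (Real.rpow_le_rpow ha.le hy.2.le hm.le)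
    rw [ENNReal.ofReal_div_of_pos ham, ENNReal.le_div_iff_mul_le
      (Or.inl (by simpa using ham)) (Or.inl ENNReal.ofReal_ne_top), mul_comm]
    exact (mul_le_mul_right h2 _).trans (h1.trans hint)
  set S := B ∩ {y | w y ≤ a} with hS
  have hSvol : ENNReal.ofReal (A / a ^ m) ≤ volume S := by
    have h1 : volume B ≤ volume (B ∩ {y | a < w y}) + volume S := by
      refine (measure_mono fun y hy => ?_).trans (measure_union_le _ _)
      rcases lt_or_ge a (w y) with h | h
      · exact Or.inl ⟨hy, h⟩
      · exact Or.inr ⟨hy, h⟩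
    rw [hB, volume_ball_eq N x hε, ← hωdef, show ω * ε ^ N = A / a ^ m + A / a ^ m by
      rw [hAm]; ring, ENNReal.ofReal_add (by positivity) (by positivity)] at h1
    exact (ENNReal.add_le_add_iff_left ENNReal.ofReal_ne_top).1
      (h1.trans (add_le_add_left hT _))
  have hSm : NullMeasurableSet S volume :=
    measurableSet_ball.nullMeasurableSet.inter (nullMeasurableSet_le hwm aemeasurable_const)
  have hD : ENNReal.ofReal (a ^ p / ε ^ ((N : ℝ) + p * s)) * volume S ≤ gagInner N s p u x := by
    rw [← lintegral_indicator_const₀ hSm]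
    refine lintegral_mono fun y => ?_
    by_cases hy : y ∈ S
    · rw [Set.indicator_of_mem hy]
      have hy2 : w y ≤ a := hy.2
      have hxy : 0 < ‖x - y‖ := by
        rw [norm_pos_iff, sub_ne_zero]
        rintro rfl
        linarith
      have hxy' : ‖x - y‖ ≤ ε := by
        have := hy.1
        rw [hB, Metric.mem_ball', dist_eq_norm] at this
        exact this.le
      have hle : a ≤ |u x - u y| :=
        le_trans (by linarith) ((le_abs_self (w x - w y)).trans (hwu x y))
      exact ENNReal.ofReal_le_ofReal (by gcongr)
    · rw [Set.indicator_of_notMem hy]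
      exact zero_le
  have hεps : ε ^ (p * s) = (2 * A / ω) ^ (p * s / N) / a ^ (p * s / N * m) := by
    rw [mul_comm (p * s / N) m, Real.rpow_mul ha.le, ← Real.div_rpow (by positivity) ham.le,
      show 2 * A / ω / a ^ m = ε ^ N by rw [← hεA]; field_simp, ← Real.rpow_natCast,
      ← Real.rpow_mul hε.le]
    congr 1
    field_simp
  have hid : a ^ (p + p * s / N * m) = 2 / ω * (2 * A / ω) ^ (p * s / N) *
      (a ^ p / ε ^ ((N : ℝ) + p * s) * (A / a ^ m)) := by
    rw [hAm, Real.rpow_add hε, Real.rpow_natCast, hεps, Real.rpow_add ha]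
    have : 0 < (2 * A / ω) ^ (p * s / N) := by positivity
    have : 0 < a ^ (p * s / N * m) := by positivity
    field_simp
  rw [hid, ENNReal.ofReal_mul (by positivity)]
  refine mul_le_mul_right ?_ _
  rw [ENNReal.ofReal_mul (by positivity)]
  exact (mul_le_mul_right hSvol _).trans hD

/-- The radius for which the ball in `pointwise_bound` has the prescribed volume. -/
lemma exists_radius {N : ℕ} (hN : 1 ≤ N) {c A : ℝ} (hc : 0 < c) (hA : 0 < A) :
    ∃ ε : ℝ, 0 < ε ∧ unitVol N * ε ^ N * c = 2 * A := by
  have hω := unitVol_pos N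
  refine ⟨(2 * A / (unitVol N * c)) ^ (1 / (N : ℝ)), by positivity, ?_⟩
  rw [← Real.rpow_natCast, ← Real.rpow_mul (by positivity), one_div_mul_cancel
    (by exact_mod_cast (by omega)), Real.rpow_one]
  field_simp

/-- A global bound on `∫ w ^ m` yields a bound on a power of `w` with exponent `p + θ m`, where
`θ = p s / N`. The critical exponent is the fixed point of `m ↦ p + θ m`. -/
lemma lintegral_bound_global {N : ℕ} (hN : 1 ≤ N) {s p m : ℝ} (hs0 : 0 < s) (hp : 0 < p)
    (hm : 0 < m) {u w : Euc N → ℝ} (hu : memW N s p u) (hw0 : ∀ x, 0 ≤ w x)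
    (hwm : AEMeasurable w volume) (hwu : ∀ x y, |w x - w y| ≤ |u x - u y|) {A : ℝ} (hA : 0 < A)
    (hint : ∫⁻ y, ENNReal.ofReal (w y ^ m) ≤ ENNReal.ofReal A) :
    ∫⁻ x, ENNReal.ofReal ((w x / 2) ^ (p + p * s / N * m)) ≤
      ENNReal.ofReal (2 / unitVol N * (2 * A / unitVol N) ^ (p * s / N)) *
        ENNReal.ofReal (gagP N s p u) := by
  rw [← lintegral_gagInner hu, ← lintegral_const_mul' _ _ ENNReal.ofReal_ne_top]
  refine lintegral_mono fun x => ?_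
  rcases (hw0 x).eq_or_lt with hx | hx
  · have : p + p * s / N * m ≠ 0 := by positivity
    simp [← hx, Real.zero_rpow this]
  · obtain ⟨ε, hε, hεA⟩ := exists_radius hN (c := (w x / 2) ^ m) (by positivity) hA
    exact pointwise_bound hN hs0 hp hm hwm hwu hA hε x hx hεA
      ((setLIntegral_le_lintegral _ _).trans hint)

/-- The local version: a bound `A` on `∫ w ^ m` over all unit balls suffices, at the price of the
`L^p` norm. At points where the radius of `pointwise_bound` would exceed `1`, `w x` itself is at
most of order `A ^ (1 / m)`. -/
lemma lintegral_bound_local {N : ℕ} (hN : 1 ≤ N) {s p m : ℝ} (hs0 : 0 < s) (hp : 0 < p)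
    (hm : 0 < m) {u w : Euc N → ℝ} (hu : memW N s p u) (hw0 : ∀ x, 0 ≤ w x)
    (hwm : AEMeasurable w volume) (hwu : ∀ x y, |w x - w y| ≤ |u x - u y|) {A : ℝ} (hA : 0 < A)
    (hint : ∀ x, ∫⁻ y in Metric.ball x 1, ENNReal.ofReal (w y ^ m) ≤ ENNReal.ofReal A) :
    ∫⁻ x, ENNReal.ofReal ((w x / 2) ^ (p + p * s / N * m)) ≤
      ENNReal.ofReal ((2 * A / unitVol N) ^ (p * s / N)) * (∫⁻ x, ENNReal.ofReal (w x ^ p)) +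
      ENNReal.ofReal (2 / unitVol N * (2 * A / unitVol N) ^ (p * s / N)) *
        ENNReal.ofReal (gagP N s p u) := by
  have hω := unitVol_pos N
  have hN0 : (0 : ℝ) < N := by exact_mod_cast hN
  rw [← lintegral_gagInner hu, ← lintegral_const_mul' _ _ ENNReal.ofReal_ne_top,
    ← lintegral_const_mul' _ _ ENNReal.ofReal_ne_top, ← lintegral_add_left']
  swap
  · exact ((hwm.pow_const p).ennreal_ofReal).const_mul _
  refine lintegral_mono fun x => ?_
  rcases (hw0 x).eq_or_lt with hx | hx
  · have : p + p * s / N * m ≠ 0 := by positivity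
    simp [← hx, Real.zero_rpow this]
  · obtain ⟨ε, hε, hεA⟩ := exists_radius hN (c := (w x / 2) ^ m) (by positivity) hA
    rcases le_or_gt ε 1 with h1 | h1
    · refine le_add_left (pointwise_bound hN hs0 hp hm hwm hwu hA hε x hx hεA ?_)
      exact (lintegral_mono_set (Metric.ball_subset_ball h1)).trans (hint x)
    · refine le_add_right ?_
      rw [← ENNReal.ofReal_mul (by positivity)]
      refine ENNReal.ofReal_le_ofReal ?_
      have h2 : (w x / 2) ^ m ≤ 2 * A / unitVol N := by
        rw [le_div_iff₀ hω, ← hεA]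
        have : 1 ≤ ε ^ N := one_le_pow₀ h1.le
        have h3 : 0 < unitVol N * (w x / 2) ^ m := by positivity
        nlinarith
      rw [Real.rpow_add (by positivity), mul_comm (p * s / N) m, Real.rpow_mul (by positivity),
        mul_comm]
      gcongr
      linarith

/-! ### The fractional Sobolev inequality -/

/-- Fractional Sobolev inequality at the critical exponent. The bound is first obtained for the
truncations `min |u| T`, for which the `L^{p*}` norm is finite and can be absorbed. -/
lemma sobolev_bound {N : ℕ} (hN : 1 ≤ N) {s p : ℝ} (hs0 : 0 < s) (hp : 0 < p)
    (hps : p * s < N) (K : ℝ) :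
    ∃ C : ENNReal, C ≠ ⊤ ∧ ∀ u : Euc N → ℝ, memW N s p u → gagP N s p u ≤ K →
      ∫⁻ x, ENNReal.ofReal (|u x| ^ ((N : ℝ) * p / ((N : ℝ) - p * s))) ≤ C := by
  have hω := unitVol_pos N
  have hN0 : (0 : ℝ) < N := by exact_mod_cast hN
  set m := (N : ℝ) * p / ((N : ℝ) - p * s) with hm_def
  have hNp : 0 < (N : ℝ) - p * s := by linarith
  have hm : 0 < m := by positivity
  set θ := p * s / N with hθ_def
  have hθ0 : 0 < θ := by positivity
  have hθ1 : θ < 1 := by rw [hθ_def, div_lt_one hN0]; exact hps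
  have hfix : p + θ * m = m := by
    rw [hm_def, hθ_def]; field_simp; ring
  have hpm : p ≤ m := by rw [← hfix]; linarith [mul_pos hθ0 hm]
  set c := 2 ^ m * (2 / unitVol N * (2 / unitVol N) ^ θ * K) with hc
  refine ⟨ENNReal.ofReal (c ^ (1 / (1 - θ))), ENNReal.ofReal_ne_top, fun u hu hK => ?_⟩
  have hG0 : 0 ≤ gagP N s p u := integral_nonneg fun z => by positivity
  have hK0 : 0 ≤ K := hG0.trans hK
  have habs := aemeasurable_abs hp hu
  have htr : ∀ T : ℕ, ∫⁻ x, ENNReal.ofReal ((min |u x| T) ^ m) ≤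
      ENNReal.ofReal (c ^ (1 / (1 - θ))) := by
    intro T
    have hfin : ∫⁻ x, ENNReal.ofReal ((min |u x| T) ^ m) < ⊤ := by
      have : ∀ x, ENNReal.ofReal ((min |u x| T) ^ m) ≤
          ENNReal.ofReal ((T : ℝ) ^ (m - p)) * ENNReal.ofReal (|u x| ^ p) := by
        intro x
        rw [← ENNReal.ofReal_mul (by positivity)]
        refine ENNReal.ofReal_le_ofReal ?_
        have h0 : 0 ≤ min |u x| (T : ℝ) := by positivity
        rw [show m = (m - p) + p by ring, Real.rpow_add_of_nonneg h0 (by linarith) hp.le]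
        simp only [add_sub_cancel_right]
        gcongr
        · exact min_le_right _ _
        · exact min_le_left _ _
      refine (lintegral_mono this).trans_lt ?_
      rw [lintegral_const_mul' _ _ ENNReal.ofReal_ne_top, lintegral_rpow_eq hu]
      exact ENNReal.mul_lt_top ENNReal.ofReal_lt_top ENNReal.ofReal_lt_top
    set X := (∫⁻ x, ENNReal.ofReal ((min |u x| T) ^ m)).toReal with hX
    have hXeq : ∫⁻ x, ENNReal.ofReal ((min |u x| T) ^ m) = ENNReal.ofReal X :=
      (ENNReal.ofReal_toReal hfin.ne).symm
    have hX0 : 0 ≤ X := ENNReal.toReal_nonneg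
    rw [hXeq]
    refine ENNReal.ofReal_le_ofReal ?_
    rcases hX0.eq_or_lt with h0 | hXpos
    · rw [← h0]; positivity
    have key := lintegral_bound_global hN hs0 hp hm hu (w := fun x => min |u x| (T : ℝ))
      (fun x => by positivity) (habs.min aemeasurable_const)
      (fun x y => by
        refine (abs_min_sub_min_le_max _ _ _ _).trans ?_
        simpa using abs_abs_sub_abs_le_abs_sub (u x) (u y)) hXpos hXeq.le
    rw [← hθ_def, hfix, ← ENNReal.ofReal_mul (by positivity)] at key
    have hscale : ∫⁻ x, ENNReal.ofReal ((min |u x| (T : ℝ) / 2) ^ m) =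
        ENNReal.ofReal (X / 2 ^ m) := by
      have : ∀ x, ENNReal.ofReal ((min |u x| (T : ℝ) / 2) ^ m) =
          ENNReal.ofReal ((2 ^ m)⁻¹) * ENNReal.ofReal ((min |u x| T) ^ m) := fun x => by
        rw [← ENNReal.ofReal_mul (by positivity), Real.div_rpow (by positivity) (by positivity)]
        congr 1
        ring
      simp_rw [this]
      rw [lintegral_const_mul' _ _ ENNReal.ofReal_ne_top, hXeq,
        ← ENNReal.ofReal_mul (by positivity)]
      congr 1
      ring
    rw [hscale, ENNReal.ofReal_le_ofReal_iff (by positivity), div_le_iff₀ (by positivity)] at key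
    have h1 : X ≤ c * X ^ θ := by
      refine key.trans ?_
      rw [show 2 * X / unitVol N = 2 / unitVol N * X by ring,
        Real.mul_rpow (by positivity) hX0, hc]
      calc _ = 2 ^ m * (2 / unitVol N * (2 / unitVol N) ^ θ * gagP N s p u) * X ^ θ := by ring
        _ ≤ _ := by gcongr
    have h2 : X ^ (1 - θ) ≤ c := by
      rw [Real.rpow_sub hXpos, Real.rpow_one, div_le_iff₀ (by positivity)]
      exact h1
    calc X = (X ^ (1 - θ)) ^ (1 / (1 - θ)) := by
          rw [← Real.rpow_mul hX0, mul_one_div_cancel (by linarith), Real.rpow_one]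
      _ ≤ _ := Real.rpow_le_rpow (by positivity) h2 (one_div_nonneg.2 (by linarith))
  -- The truncations agree with `|u|` from some index on, so Fatou's lemma removes `T`.
  have hlim : ∀ x, liminf (fun T : ℕ => ENNReal.ofReal ((min |u x| T) ^ m)) atTop =
      ENNReal.ofReal (|u x| ^ m) := by
    intro x
    refine Tendsto.liminf_eq (tendsto_const_nhds.congr' ?_)
    obtain ⟨n, hn⟩ := exists_nat_ge |u x|
    filter_upwards [eventually_ge_atTop n] with T hT
    rw [min_eq_left (hn.trans (by exact_mod_cast hT))]
  calc _ = ∫⁻ x, liminf (fun T : ℕ => ENNReal.ofReal ((min |u x| T) ^ m)) atTop := by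
        simp_rw [hlim]
    _ ≤ _ := lintegral_liminf_le' fun T =>
        ((habs.min aemeasurable_const).pow_const m).ennreal_ofReal
    _ ≤ _ := liminf_le_of_le (by isBoundedDefault) (fun b hb => by
        obtain ⟨T, hT⟩ := hb.exists
        exact hT.trans (htr T))

/-! ### Interpolation and vanishing -/

lemma lintegral_interpolation {N : ℕ} {v : Euc N → ℝ} (hv0 : ∀ x, 0 ≤ v x)
    (hv : AEMeasurable v volume) {a b r l : ℝ} (ha : 0 < a) (hb : 0 < b) (hl0 : 0 ≤ l)
    (hl1 : l ≤ 1) (hr : r = (1 - l) * a + l * b) :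
    ∫⁻ x, ENNReal.ofReal (v x ^ r) ≤ (∫⁻ x, ENNReal.ofReal (v x ^ a)) ^ (1 - l) *
      (∫⁻ x, ENNReal.ofReal (v x ^ b)) ^ l := by
  have h := ENNReal.lintegral_mul_norm_pow_le (μ := volume)
    (hv.pow_const a).ennreal_ofReal (hv.pow_const b).ennreal_ofReal
    (sub_nonneg.2 hl1) hl0 (by ring)
  refine le_trans (le_of_eq (lintegral_congr fun x => ?_)) h
  have := hv0 x
  rw [ENNReal.ofReal_rpow_of_nonneg (by positivity) (by linarith),
    ENNReal.ofReal_rpow_of_nonneg (by positivity) (by linarith),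
    ← ENNReal.ofReal_mul (by positivity), ← Real.rpow_mul this, ← Real.rpow_mul this,
    ← Real.rpow_add_of_nonneg this (by nlinarith) (by positivity), hr]
  congr 2
  ring

lemma interpolation_weight {a b r : ℝ} (hab : a < b) (har : a ≤ r) (hrb : r ≤ b) :
    0 ≤ (r - a) / (b - a) ∧ (r - a) / (b - a) ≤ 1 ∧
      r = (1 - (r - a) / (b - a)) * a + (r - a) / (b - a) * b := by
  have : 0 < b - a := by linarith
  refine ⟨div_nonneg (by linarith) this.le, (div_le_one this).2 (by linarith), ?_⟩
  field_simp
  ring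

theorem lions_vanishing_lemma (N : ℕ) (hN : 1 ≤ N) (s p : ℝ)
    (hs0 : 0 < s) (hs1 : s < 1) (hp1 : 1 < p) (hps : p * s < N)
    (q : ℝ) (hpq : p ≤ q) (hq : q < (N : ℝ) * p / ((N : ℝ) - p * s))
    (u : ℕ → Euc N → ℝ) (hmem : ∀ k, memW N s p (u k))
    (hbdd : ∃ M : ℝ, ∀ k, sobNorm N s p (u k) ≤ M)
    (hvan : Filter.atTop.liminf
        (fun k => ⨆ x : Euc N, ∫ y in Metric.ball x 1, |u k y| ^ q) = 0) :
    ∃ φ : ℕ → ℕ, StrictMono φ ∧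
      ∀ r ∈ Set.Ioo q ((N : ℝ) * p / ((N : ℝ) - p * s)),
        Tendsto (fun j => (∫ x : Euc N, |u (φ j) x| ^ r) ^ (1 / r)) atTop (nhds 0) := by
  have hω := unitVol_pos N
  have hN0 : (0 : ℝ) < N := by exact_mod_cast hN
  have hp : 0 < p := by linarith
  have hq0 : 0 < q := by linarith
  have hNp : 0 < (N : ℝ) - p * s := by linarith
  obtain ⟨M, hM⟩ := hbdd
  have hI0 : ∀ k, 0 ≤ intP N p (u k) := fun k => integral_nonneg fun z => by positivity
  have hG0 : ∀ k, 0 ≤ gagP N s p (u k) := fun k => integral_nonneg fun z => by positivity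
  have hsum : ∀ k, intP N p (u k) + gagP N s p (u k) ≤ M ^ p := by
    intro k
    have h0 : 0 ≤ intP N p (u k) + gagP N s p (u k) := add_nonneg (hI0 k) (hG0 k)
    have h := Real.rpow_le_rpow (Real.rpow_nonneg h0 _) (hM k) hp.le
    rwa [← Real.rpow_mul h0, one_div_mul_cancel hp.ne', Real.rpow_one] at h
  set K := M ^ p with hK_def
  have hK0 : 0 ≤ K := (add_nonneg (hI0 0) (hG0 0)).trans (hsum 0)
  have hI : ∀ k, intP N p (u k) ≤ K := fun k => by linarith [hsum k, hG0 k]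
  have hG : ∀ k, gagP N s p (u k) ≤ K := fun k => by linarith [hsum k, hI0 k]
  have habs : ∀ k, AEMeasurable (fun x => |u k x|) volume := fun k => aemeasurable_abs hp (hmem k)
  obtain ⟨C, hC, hsob⟩ := sobolev_bound hN hs0 hp hps K
  set m := (N : ℝ) * p / ((N : ℝ) - p * s) with hm_def
  have hm : 0 < m := by positivity
  have hLp : ∀ k, ∫⁻ x, ENNReal.ofReal (|u k x| ^ p) ≤ ENNReal.ofReal K := fun k => by
    rw [lintegral_rpow_eq (hmem k)]
    exact ENNReal.ofReal_le_ofReal (hI k)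
  have hLm : ∀ k, ∫⁻ x, ENNReal.ofReal (|u k x| ^ m) ≤ C := fun k => hsob _ (hmem k) (hG k)
  -- A uniform `L^q` bound, so that neither the supremum nor the lower limit in `hvan` is a junk
  -- value.
  obtain ⟨l0, l1, hl⟩ := interpolation_weight (hpq.trans_lt hq) hpq hq.le
  set l := (q - p) / (m - p)
  set Q := (ENNReal.ofReal K) ^ (1 - l) * C ^ l with hQ
  have hQtop : Q ≠ ⊤ := ENNReal.mul_ne_top
    (ENNReal.rpow_ne_top_of_nonneg (by linarith) ENNReal.ofReal_ne_top)
    (ENNReal.rpow_ne_top_of_nonneg l0 hC)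
  have hLq : ∀ k, ∫⁻ x, ENNReal.ofReal (|u k x| ^ q) ≤ Q := fun k =>
    (lintegral_interpolation (fun x => abs_nonneg _) (habs k) hp hm l0 l1 hl).trans
      (mul_le_mul' (ENNReal.rpow_le_rpow (hLp k) (by linarith))
        (ENNReal.rpow_le_rpow (hLm k) l0))
  have hqint : ∀ k, Integrable (fun x => |u k x| ^ q) volume := fun k => by
    refine ⟨((habs k).pow_const q).aestronglyMeasurable, ?_⟩
    rw [hasFiniteIntegral_iff_ofReal (Eventually.of_forall fun x => by positivity)]
    exact (hLq k).trans_lt hQtop.lt_top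
  have hball : ∀ k (x : Euc N), ∫ y in Metric.ball x 1, |u k y| ^ q ≤ Q.toReal := fun k x => by
    refine (setIntegral_le_integral (hqint k) (Eventually.of_forall fun x => by positivity)).trans ?_
    rw [integral_eq_lintegral_of_nonneg_ae (Eventually.of_forall fun x => by positivity)
      (hqint k).1]
    exact ENNReal.toReal_mono hQtop (hLq k)
  have hbddx : ∀ k, BddAbove (Set.range fun x : Euc N => ∫ y in Metric.ball x 1, |u k y| ^ q) :=
    fun k => ⟨Q.toReal, by rintro _ ⟨x, rfl⟩; exact hball k x⟩
  have hfreq : ∀ n : ℕ, ∃ᶠ k in atTop,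
      (⨆ x : Euc N, ∫ y in Metric.ball x 1, |u k y| ^ q) < 1 / ((n : ℝ) + 1) := by
    intro n
    refine frequently_lt_of_liminf_lt ?_ (by rw [hvan]; positivity)
    exact (isBoundedUnder_of ⟨Q.toReal, fun k => ciSup_le (hball k)⟩ :
      IsBoundedUnder (· ≤ ·) atTop _).isCoboundedUnder_ge
  obtain ⟨φ, hφ, hφS⟩ := extraction_forall_of_frequently hfreq
  refine ⟨φ, hφ, ?_⟩
  -- The exponent `t = p + θ q` lies strictly between `p` and `m`, and the `L^t` norms vanish.
  set θ := p * s / N with hθ_def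
  have hθ0 : 0 < θ := by positivity
  have hfix : p + θ * m = m := by
    rw [hm_def, hθ_def]; field_simp; ring
  set t := p + θ * q with ht_def
  have hpt : p < t := by rw [ht_def]; linarith [mul_pos hθ0 hq0]
  have htm : t < m := by
    rw [ht_def, ← hfix]
    linarith [mul_lt_mul_of_pos_left hq hθ0]
  have ht : 0 < t := hp.trans hpt
  have hbound : ∀ n : ℕ, ∫⁻ x, ENNReal.ofReal (|u (φ n) x| ^ t) ≤
      ENNReal.ofReal (2 ^ t * ((2 * (1 / ((n : ℝ) + 1)) / unitVol N) ^ θ * K +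
        2 / unitVol N * (2 * (1 / ((n : ℝ) + 1)) / unitVol N) ^ θ * K)) := by
    intro n
    have hA : 0 < 1 / ((n : ℝ) + 1) := by positivity
    have key := lintegral_bound_local hN hs0 hp hq0 (hmem (φ n)) (w := fun x => |u (φ n) x|)
      (fun x => abs_nonneg _) (habs (φ n)) (fun x y => abs_abs_sub_abs_le_abs_sub _ _) hA
      (fun x => by
        rw [← ofReal_integral_eq_lintegral_ofReal (hqint (φ n)).integrableOn
          (Eventually.of_forall fun x => by positivity)]
        exact ENNReal.ofReal_le_ofReal ((le_ciSup (hbddx (φ n)) x).trans (hφS n).le))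
    rw [← hθ_def, ← ht_def] at key
    have hscale : ∫⁻ x, ENNReal.ofReal (|u (φ n) x| ^ t) =
        ENNReal.ofReal (2 ^ t) * ∫⁻ x, ENNReal.ofReal ((|u (φ n) x| / 2) ^ t) := by
      rw [← lintegral_const_mul' _ _ ENNReal.ofReal_ne_top]
      refine lintegral_congr fun x => ?_
      rw [← ENNReal.ofReal_mul (by positivity), ← Real.mul_rpow (by positivity) (by positivity)]
      congr 2
      ring
    rw [hscale, ENNReal.ofReal_mul (by positivity), ENNReal.ofReal_add (by positivity)
      (by positivity), ENNReal.ofReal_mul (by positivity), ENNReal.ofReal_mul (by positivity)]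
    refine mul_le_mul_right (key.trans ?_) _
    exact add_le_add (mul_le_mul_right (hLp _) _)
      (mul_le_mul_right (ENNReal.ofReal_le_ofReal (hG _)) _)
  have hLt : Tendsto (fun n => ∫⁻ x, ENNReal.ofReal (|u (φ n) x| ^ t)) atTop (nhds 0) := by
    refine tendsto_of_tendsto_of_tendsto_of_le_of_le tendsto_const_nhds ?_ (fun _ => zero_le)
      hbound
    rw [← ENNReal.ofReal_zero]
    refine ENNReal.tendsto_ofReal ?_
    have h1 : Tendsto (fun n : ℕ => (2 * (1 / ((n : ℝ) + 1)) / unitVol N) ^ θ) atTop (nhds 0) := by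
      have := ((tendsto_one_div_add_atTop_nhds_zero_nat (𝕜 := ℝ)).const_mul 2).div_const (unitVol N)
      simpa [Real.zero_rpow hθ0.ne'] using this.rpow_const (p := θ) (Or.inr hθ0.le)
    simpa using ((h1.mul_const K).add ((h1.const_mul (2 / unitVol N)).mul_const K)).const_mul (2 ^ t)
  have hpow : ∀ {l : ℝ}, 0 < l →
      Tendsto (fun n => (∫⁻ x, ENNReal.ofReal (|u (φ n) x| ^ t)) ^ l) atTop (nhds 0) := by
    intro l hl
    have := (ENNReal.continuous_rpow_const (y := l)).tendsto 0 |>.comp hLt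
    rwa [ENNReal.zero_rpow_of_pos hl] at this
  intro r hr
  have hr0 : 0 < r := hq0.trans hr.1
  have hLr : Tendsto (fun n => ∫⁻ x, ENNReal.ofReal (|u (φ n) x| ^ r)) atTop (nhds 0) := by
    rcases le_total r t with hrt | hrt
    · obtain ⟨l0, l1, hl⟩ := interpolation_weight hpt (hpq.trans hr.1.le) hrt
      have hlpos : 0 < (r - p) / (t - p) := div_pos (by linarith [hr.1]) (by linarith)
      refine tendsto_of_tendsto_of_tendsto_of_le_of_le tendsto_const_nhds ?_ (fun _ => zero_le)
        (fun n => (lintegral_interpolation (fun x => abs_nonneg _) (habs (φ n)) hp ht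
          l0 l1 hl).trans
          (mul_le_mul_left (ENNReal.rpow_le_rpow (hLp (φ n)) (by linarith)) _))
      have := ENNReal.Tendsto.const_mul (hpow hlpos) (Or.inr
        (ENNReal.rpow_ne_top_of_nonneg (sub_nonneg.2 l1) (ENNReal.ofReal_ne_top (r := K))))
      rwa [mul_zero] at this
    · obtain ⟨l0, l1, hl⟩ := interpolation_weight htm hrt hr.2.le
      have hlpos : 0 < 1 - (r - t) / (m - t) := by
        rw [sub_pos, div_lt_one (by linarith)]
        linarith [hr.2]
      refine tendsto_of_tendsto_of_tendsto_of_le_of_le tendsto_const_nhds ?_ (fun _ => zero_le)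
        (fun n => (lintegral_interpolation (fun x => abs_nonneg _) (habs (φ n)) ht hm
          l0 l1 hl).trans
          (mul_le_mul_right (ENNReal.rpow_le_rpow (hLm (φ n)) l0) _))
      have := ENNReal.Tendsto.mul_const (hpow hlpos) (Or.inr
        (ENNReal.rpow_ne_top_of_nonneg l0 hC))
      rwa [zero_mul] at this
  have hint : Tendsto (fun n => ∫ x, |u (φ n) x| ^ r) atTop (nhds 0) := by
    have := (ENNReal.tendsto_toReal ENNReal.zero_ne_top).comp hLr
    rw [ENNReal.toReal_zero] at this
    refine this.congr fun n => ?_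
    exact (integral_eq_lintegral_of_nonneg_ae (Eventually.of_forall fun x => by positivity)
      ((habs (φ n)).pow_const r).aestronglyMeasurable).symm
  have hr' : 0 < 1 / r := by positivity
  simpa [Real.zero_rpow (inv_pos.2 hr0).ne'] using hint.rpow_const (p := 1 / r) (Or.inr hr'.le)
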